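/- Let N_q, N_c ≥ 1, let h : {1,…,N_q} → ℝ with h_n > 0 for all n, and set H_0 := −∑_{n=1}^{N_q} h_n Z_n. Let V_1,…,V_{N_c} ∈ 𝒫^{N_q}. Suppose Ψ : ℝ^{N_c} → ℂ^(2^{N_q}) and E : ℝ^{N_c} → ℝ are analytic in a neighbourhood of 0 and satisfy, for all J in that neighbourhood: (H_0 + ∑_{i=1}^{N_c} J_i V_i)·Ψ(J) = E(J)·Ψ(J), ‖Ψ(J)‖ = 1, ⟨0|Ψ(J)⟩ is real and positive, and Ψ(0) = |0⟩. Then for every multi-index k ∈ ℕ^{N_c}, the multivariate Taylor coefficient Ψ_k := (1/k!)·∂^k_J Ψ(0) of Ψ at J = 0 satisfies Ψ_k = C_k · V^{·k}|0⟩ for some real number C_k. -/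

import Mathlib

open Matrix

/-- The single-qubit Pauli matrices `I, X, Y, Z`, indexed by `Fin 4`. -/
noncomputable def pauli1 : Fin 4 → Matrix (Fin 2) (Fin 2) ℂ :=
  ![1, !![0, 1; 1, 0], !![0, -Complex.I; Complex.I, 0], !![1, 0; 0, -1]]

/-- The `N`-qubit Pauli basis element with single-qubit factor `pauli1 (f n)` on qubit `n`. -/
noncomputable def pauliTensor {N : ℕ} (f : Fin N → Fin 4) :
    Matrix (Fin N → Fin 2) (Fin N → Fin 2) ℂ :=
  fun s t => ∏ n, pauli1 (f n) (s n) (t n)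

/-- The computational basis state `|s⟩`. -/
def ket {N : ℕ} (s : Fin N → Fin 2) : (Fin N → Fin 2) → ℂ :=
  fun t => if t = s then 1 else 0

/-- The partial derivative of `F` in the `i`-th coordinate direction. -/
noncomputable def pderiv {n : ℕ} {E : Type*} [NormedAddCommGroup E] [NormedSpace ℝ E]
    (i : Fin n) (F : (Fin n → ℝ) → E) : (Fin n → ℝ) → E :=
  fun J => fderiv ℝ F J (Pi.single i 1)

/-- The iterated partial derivative `∂^k F` for a multi-index `k`. -/
noncomputable def iterPDeriv {n : ℕ} {E : Type*} [NormedAddCommGroup E] [NormedSpace ℝ E]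
    (k : Fin n → ℕ) (F : (Fin n → ℝ) → E) : (Fin n → ℝ) → E :=
  (List.finRange n).foldr (fun i G => (pderiv i)^[k i] G) F

/-- The ordered power `V^{·k} = V_1^{k_1}·…·V_{N_c}^{k_{N_c}}`. -/
noncomputable def Vpow {Nq Nc : ℕ} (V : Fin Nc → Matrix (Fin Nq → Fin 2) (Fin Nq → Fin 2) ℂ)
    (k : Fin Nc → ℕ) : Matrix (Fin Nq → Fin 2) (Fin Nq → Fin 2) ℂ :=
  (List.ofFn fun i => V i ^ k i).prod

/-!
Since `H₀` is diagonal with a nondegenerate level `|o⟩`, for small `J` the Hamiltonian `H(J)` has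
only one unit eigenvector near `|o⟩` whose `o`-th component is positive. Hence a real-linear
isometry `T` which fixes `|o⟩`, commutes with `H₀` and satisfies `T V_i = ε_i V_i T` maps `Ψ(J)` to
`Ψ(εJ)`, where `εJ = (ε_i J_i)_i`. Taking Taylor coefficients, `T Ψ_k = ε^k Ψ_k`, and `V^{·k}|o⟩`
obeys the same relation. For `T = ± Z_n` this makes both vectors joint eigenvectors of all the `Z_n`
with the same signs, so both lie on the line of a single basis state. For `T` the complex
conjugation it makes their ratio real.
-/

open Filter Topology

section PartialDerivatives

variable {n : ℕ} {E F : Type*} [NormedAddCommGroup E] [NormedSpace ℝ E]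
  [NormedAddCommGroup F] [NormedSpace ℝ F] {f : (Fin n → ℝ) → E} {g : (Fin n → ℝ) → F}
  {ε : Fin n → ℝ} {T : E ≃L[ℝ] F} {x : Fin n → ℝ}

lemma pderiv_comp_mul (hε : ∀ i, ε i ≠ 0) (i : Fin n) (J : Fin n → ℝ) :
    pderiv i (fun J => g (ε * J)) J = ε i • pderiv i g (ε * J) := by
  let A : (Fin n → ℝ) ≃L[ℝ] (Fin n → ℝ) := .piCongrRight fun j =>
    .smulLeft (Units.mk0 (ε j) (hε j))
  have hA : ⇑A = (ε * ·) := rfl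
  have hAi : A (Pi.single i 1) = ε i • Pi.single i 1 := by
    simp [hA, ← Pi.single_mul_right, ← Pi.single_smul]
  calc pderiv i (fun J => g (ε * J)) J = fderiv ℝ (g ∘ A) J (Pi.single i 1) := rfl
    _ = ε i • fderiv ℝ g (A J) (Pi.single i 1) := by
      rw [A.comp_right_fderiv, ContinuousLinearMap.comp_apply, ContinuousLinearEquiv.coe_coe, hAi,
        map_smul]

lemma eventually_pderiv_mul_eq (hε : ∀ i, ε i ≠ 0) (i : Fin n) {c : ℝ}
    (h : ∀ᶠ J in 𝓝 x, c • g (ε * J) = T (f J)) :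
    ∀ᶠ J in 𝓝 x, (ε i * c) • pderiv i g (ε * J) = T (pderiv i f J) := by
  filter_upwards [EventuallyEq.fderiv (𝕜 := ℝ) h] with J hJ
  calc (ε i * c) • pderiv i g (ε * J)
      = fderiv ℝ (c • fun J => g (ε * J)) J (Pi.single i 1) := by
        rw [fderiv_const_smul_field, mul_comm, mul_smul, ← pderiv_comp_mul hε]; rfl
    _ = fderiv ℝ (T ∘ f) J (Pi.single i 1) := by
        exact congrArg (fun L : (Fin n → ℝ) →L[ℝ] F => L (Pi.single i 1)) hJ
    _ = T (pderiv i f J) := by rw [T.comp_fderiv]; rfl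

lemma eventually_iterate_pderiv_mul_eq (hε : ∀ i, ε i ≠ 0) (i : Fin n) (m : ℕ) {c : ℝ}
    (h : ∀ᶠ J in 𝓝 x, c • g (ε * J) = T (f J)) :
    ∀ᶠ J in 𝓝 x, (ε i ^ m * c) • (pderiv i)^[m] g (ε * J) = T ((pderiv i)^[m] f J) := by
  induction m with
  | zero => simpa using h
  | succ m ih =>
    simp only [Function.iterate_succ_apply', pow_succ', mul_assoc]
    exact eventually_pderiv_mul_eq hε i ih

lemma eventually_iterPDeriv_mul_eq (hε : ∀ i, ε i ≠ 0) (k : Fin n → ℕ)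
    (h : ∀ᶠ J in 𝓝 x, g (ε * J) = T (f J)) :
    ∀ᶠ J in 𝓝 x, (∏ i, ε i ^ k i) • iterPDeriv k g (ε * J) = T (iterPDeriv k f J) := by
  rw [← List.prod_ofFn, List.ofFn_eq_map]
  unfold iterPDeriv
  induction List.finRange n with
  | nil => simpa using h
  | cons i l ih =>
    simp only [List.map_cons, List.prod_cons, List.foldr_cons]
    exact eventually_iterate_pderiv_mul_eq hε i (k i) ih

end PartialDerivatives

section SimpleEigenvalue

variable {ι R : Type*} [Fintype ι] [CommRing R]

lemma eigenvalue_eq_mulVec_apply {M : Matrix ι ι R} {u : ι → R} {a : R} {o : ι}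
    (hu : M *ᵥ u = a • u) (huo : u o = 1) : a = (M *ᵥ u) o := by
  simp [hu, huo]

variable [DecidableEq ι]

/-- The matrix `M - a + v rᵀ`, where `a = (M u)ₒ` is the eigenvalue of an eigenvector `u` with
`uₒ = 1` and `r` is minus the `o`-th row of `M` with its `o`-th entry replaced by `1`. If `v` is
another eigenvector with `vₒ = 1`, then `(M - a) (u - v)` is a multiple of `v`, and the rank-one
term is chosen so as to cancel it. -/
def deflation (o : ι) (M : Matrix ι ι R) (u v : ι → R) : Matrix ι ι R :=
  M - (M *ᵥ u) o • (1 : Matrix ι ι R) + vecMulVec v (Function.update (-M o) o 1)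

lemma deflation_mulVec_sub {M : Matrix ι ι R} {u v : ι → R} {a b : R} {o : ι}
    (hu : M *ᵥ u = a • u) (hv : M *ᵥ v = b • v) (huo : u o = 1) (hvo : v o = 1) :
    deflation o M u v *ᵥ (u - v) = 0 := by
  have hrow : Function.update (-M o) o 1 ⬝ᵥ (u - v) = b - a := by
    have hne : ∀ t, Function.update (-M o) o 1 t * (u - v) t = -(M o t * (u - v) t) := by
      intro t
      obtain rfl | ht := eq_or_ne t o
      · simp [huo, hvo]
      · simp [ht]
    calc Function.update (-M o) o 1 ⬝ᵥ (u - v) = -(M *ᵥ (u - v)) o := by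
          simp only [dotProduct, mulVec, hne, Finset.sum_neg_distrib]
      _ = b - a := by simp [mulVec_sub, hu, hv, huo, hvo]
  rw [deflation, ← eigenvalue_eq_mulVec_apply hu huo, add_mulVec, sub_mulVec, vecMulVec_mulVec,
    hrow, smul_mulVec, one_mulVec, mulVec_sub, hu, hv, op_smul_eq_smul]
  module

lemma deflation_diagonal (d : ι → R) (o : ι) :
    deflation o (diagonal d) (Pi.single o 1) (Pi.single o 1)
      = diagonal (Function.update (fun s => d s - d o) o 1) := by
  ext s t
  obtain rfl | hs := eq_or_ne s o <;> obtain rfl | ht := eq_or_ne t s <;>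
    simp_all [deflation, vecMulVec_apply, one_apply, eq_comm]

lemma eq_single_of_diagonal_mulVec_eq_smul [IsDomain R] {d : ι → R} {o : ι}
    (hd : ∀ s, s ≠ o → d s ≠ d o) {u : ι → R} {a : R} (hu : diagonal d *ᵥ u = a • u)
    (huo : u o = 1) : u = Pi.single o 1 := by
  have ha : a = d o := by rw [eigenvalue_eq_mulVec_apply hu huo]; simp [mulVec_diagonal, huo]
  ext s
  obtain rfl | hs := eq_or_ne s o
  · simp [huo]
  · have hus : d s * u s = d o * u s := by simpa [mulVec_diagonal, ha] using congrFun hu s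
    simpa [hs, hd s hs] using hus

variable [TopologicalSpace R] [IsTopologicalRing R]

lemma continuous_det_deflation (o : ι) :
    Continuous fun p : Matrix ι ι R × (ι → R) × (ι → R) => (deflation o p.1 p.2.1 p.2.2).det := by
  have hrow : Continuous fun p : Matrix ι ι R × (ι → R) × (ι → R) => -p.1 o :=
    (continuous_apply o).comp continuous_fst |>.neg
  have happ : Continuous fun p : Matrix ι ι R × (ι → R) × (ι → R) => (p.1 *ᵥ p.2.1) o :=
    (continuous_apply o).comp (continuous_fst.matrix_mulVec continuous_snd.fst)
  exact ((continuous_fst.sub (happ.smul continuous_const)).add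
    (continuous_snd.snd.matrix_vecMulVec (hrow.update o continuous_const))).matrix_det

lemma eventuallyEq_of_mulVec_eq_smul [IsDomain R] [T1Space R] {X : Type*} [TopologicalSpace X]
    {x₀ : X} {M : X → Matrix ι ι R} (hM : ContinuousAt M x₀) {d : ι → R}
    (hM₀ : M x₀ = diagonal d) {o : ι} (hd : ∀ s, s ≠ o → d s ≠ d o) {u v : X → ι → R}
    (hu : ContinuousAt u x₀) (hv : ContinuousAt v x₀)
    (hMu : ∀ᶠ x in 𝓝 x₀, ∃ a : R, M x *ᵥ u x = a • u x)
    (hMv : ∀ᶠ x in 𝓝 x₀, ∃ b : R, M x *ᵥ v x = b • v x)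
    (huo : ∀ᶠ x in 𝓝 x₀, u x o = 1) (hvo : ∀ᶠ x in 𝓝 x₀, v x o = 1) :
    u =ᶠ[𝓝 x₀] v := by
  have hu₀ : u x₀ = Pi.single o 1 := by
    obtain ⟨a, ha⟩ := hMu.self_of_nhds
    exact eq_single_of_diagonal_mulVec_eq_smul hd (hM₀ ▸ ha) huo.self_of_nhds
  have hv₀ : v x₀ = Pi.single o 1 := by
    obtain ⟨b, hb⟩ := hMv.self_of_nhds
    exact eq_single_of_diagonal_mulVec_eq_smul hd (hM₀ ▸ hb) hvo.self_of_nhds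
  have hcont : ContinuousAt (fun x => (deflation o (M x) (u x) (v x)).det) x₀ :=
    (continuous_det_deflation o).continuousAt.comp (hM.prodMk (hu.prodMk hv))
  have hdet₀ : (deflation o (M x₀) (u x₀) (v x₀)).det ≠ 0 := by
    rw [hM₀, hu₀, hv₀, deflation_diagonal, det_diagonal, Finset.prod_ne_zero_iff]
    intro s _
    obtain rfl | hs := eq_or_ne s o
    · simp
    · simpa [hs, sub_eq_zero] using hd s hs
  filter_upwards [hcont.eventually_ne hdet₀, hMu, hMv, huo, hvo] with x hdet ⟨a, ha⟩ ⟨b, hb⟩ h₁ h₂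
  exact sub_eq_zero.1 (eq_zero_of_mulVec_eq_zero hdet (deflation_mulVec_sub ha hb h₁ h₂))

end SimpleEigenvalue

section PositiveEigenstates

open ComplexOrder

variable {ι : Type*} [Fintype ι]

/-- `ψ` is a unit eigenvector of `H` with real eigenvalue, its phase being fixed by
`⟨o|ψ⟩ > 0`. In the order on `ℂ`, `0 < z` says that `z` is real and positive. -/
structure IsPositiveEigenstate (H : Matrix ι ι ℂ) (o : ι) (ψ : ι → ℂ) : Prop where
  eigen : ∃ e : ℝ, H *ᵥ ψ = e • ψ
  sum_normSq : ∑ s, Complex.normSq (ψ s) = 1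
  apply_pos : 0 < ψ o

lemma eq_of_inv_smul_eq_of_sum_normSq {ψ φ : ι → ℂ} {o : ι}
    (hψ : ∑ s, Complex.normSq (ψ s) = 1) (hφ : ∑ s, Complex.normSq (φ s) = 1)
    (hψo : 0 < ψ o) (hφo : 0 < φ o) (h : (ψ o)⁻¹ • ψ = (φ o)⁻¹ • φ) : ψ = φ := by
  have hc : 0 < ψ o / φ o := div_pos hψo hφo
  have hψφ : ψ = (ψ o / φ o) • φ := by
    rw [div_eq_mul_inv, mul_smul, ← h, smul_inv_smul₀ hψo.ne']
  have hnormSq : Complex.normSq (ψ o / φ o) = 1 := by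
    rw [hψφ] at hψ
    simpa [-map_div₀, Complex.normSq_mul, ← Finset.mul_sum, hφ] using hψ
  have hone : ψ o / φ o = 1 := by
    rw [Complex.eq_coe_norm_of_nonneg hc.le, Complex.norm_def, hnormSq]
    simp
  rw [hψφ, hone, one_smul]

lemma eventuallyEq_of_isPositiveEigenstate [DecidableEq ι] {X : Type*} [TopologicalSpace X]
    {x₀ : X} {M : X → Matrix ι ι ℂ} (hM : ContinuousAt M x₀) {d : ι → ℂ}
    (hM₀ : M x₀ = diagonal d) {o : ι} (hd : ∀ s, s ≠ o → d s ≠ d o) {ψ φ : X → ι → ℂ}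
    (hψ : ContinuousAt ψ x₀) (hφ : ContinuousAt φ x₀)
    (hMψ : ∀ᶠ x in 𝓝 x₀, IsPositiveEigenstate (M x) o (ψ x))
    (hMφ : ∀ᶠ x in 𝓝 x₀, IsPositiveEigenstate (M x) o (φ x)) :
    ψ =ᶠ[𝓝 x₀] φ := by
  have hcont : ∀ {χ : X → ι → ℂ}, ContinuousAt χ x₀ → 0 < χ x₀ o →
      ContinuousAt (fun x => (χ x o)⁻¹ • χ x) x₀ := fun hχ h₀ =>
    ((continuousAt_pi.1 hχ o).inv₀ h₀.ne').smul hχ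
  have heigen : ∀ {χ : X → ι → ℂ}, (∀ᶠ x in 𝓝 x₀, IsPositiveEigenstate (M x) o (χ x)) →
      ∀ᶠ x in 𝓝 x₀, ∃ a : ℂ, M x *ᵥ ((χ x o)⁻¹ • χ x) = a • (χ x o)⁻¹ • χ x := fun hχ => by
    filter_upwards [hχ] with x hx
    obtain ⟨e, he⟩ := hx.eigen
    exact ⟨e, by rw [mulVec_smul, he, Complex.coe_smul, smul_comm]⟩
  have hone : ∀ {χ : X → ι → ℂ}, (∀ᶠ x in 𝓝 x₀, IsPositiveEigenstate (M x) o (χ x)) →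
      ∀ᶠ x in 𝓝 x₀, ((χ x o)⁻¹ • χ x) o = 1 := fun hχ =>
    hχ.mono fun x hx => inv_mul_cancel₀ hx.apply_pos.ne'
  have hray := eventuallyEq_of_mulVec_eq_smul hM hM₀ hd
    (hcont hψ hMψ.self_of_nhds.apply_pos) (hcont hφ hMφ.self_of_nhds.apply_pos)
    (heigen hMψ) (heigen hMφ) (hone hMψ) (hone hMφ)
  filter_upwards [hray, hMψ, hMφ] with x hx hψx hφx
  exact eq_of_inv_smul_eq_of_sum_normSq hψx.sum_normSq hφx.sum_normSq hψx.apply_pos hφx.apply_pos hx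

end PositiveEigenstates

section PerturbedHamiltonian

variable {ι : Type*} [DecidableEq ι] {Nc : ℕ}

/-- The Hamiltonian `H(J) = H₀ + ∑ i, J i • V i` whose unperturbed part `H₀` is diagonal in the
computational basis with energies `d`. -/
def perturbedHamiltonian (d : ι → ℝ) (V : Fin Nc → Matrix ι ι ℂ) (J : Fin Nc → ℝ) :
    Matrix ι ι ℂ :=
  diagonal (fun s => (d s : ℂ)) + ∑ i, (J i : ℂ) • V i

lemma continuous_perturbedHamiltonian (d : ι → ℝ) (V : Fin Nc → Matrix ι ι ℂ) :
    Continuous (perturbedHamiltonian d V) := by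
  unfold perturbedHamiltonian
  fun_prop

lemma perturbedHamiltonian_zero (d : ι → ℝ) (V : Fin Nc → Matrix ι ι ℂ) :
    perturbedHamiltonian d V 0 = diagonal fun s => (d s : ℂ) := by
  simp [perturbedHamiltonian]

lemma perturbedHamiltonian_mulVec [Fintype ι] (d : ι → ℝ) (V : Fin Nc → Matrix ι ι ℂ)
    (J : Fin Nc → ℝ) (f : ι → ℂ) : perturbedHamiltonian d V J *ᵥ f
      = diagonal (fun s => (d s : ℂ)) *ᵥ f + ∑ i, J i • (V i *ᵥ f) := by
  simp [perturbedHamiltonian, add_mulVec, sum_mulVec, smul_mulVec, Complex.coe_smul]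

end PerturbedHamiltonian

section TwistedSymmetries

open ComplexOrder

variable {ι : Type*} {Nc : ℕ}

/-- The real-linear map of `ι → ℂ` acting on the component `s` by `τ s`. -/
noncomputable def entrywise (τ : ι → ℂ ≃ₗᵢ[ℝ] ℂ) : (ι → ℂ) ≃L[ℝ] (ι → ℂ) :=
  .piCongrRight fun s => (τ s).toContinuousLinearEquiv

/-- The entrywise map given by `τ` fixes `|o⟩` and commutes with each `V i` up to the factor
`ε i`. Only real-linearity of the `τ s` is asked for, so that complex conjugation is covered. -/
structure IsTwistedSymmetry (o : ι) (V : Fin Nc → Matrix ι ι ℂ) (τ : ι → ℂ ≃ₗᵢ[ℝ] ℂ)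
    (ε : Fin Nc → ℝ) : Prop where
  ne_zero : ∀ i, ε i ≠ 0
  map_one : τ o 1 = 1
  map_mul : ∀ i s t z, τ s (V i s t * z) = ε i • (V i s t * τ t z)

variable {o : ι} {V : Fin Nc → Matrix ι ι ℂ} {τ : ι → ℂ ≃ₗᵢ[ℝ] ℂ} {ε : Fin Nc → ℝ}

@[simp]
lemma entrywise_apply (τ : ι → ℂ ≃ₗᵢ[ℝ] ℂ) (f : ι → ℂ) (s : ι) : entrywise τ f s = τ s (f s) :=
  rfl

lemma IsTwistedSymmetry.entrywise_apply_pos (h : IsTwistedSymmetry o V τ ε) {f : ι → ℂ}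
    (hf : 0 < f o) : 0 < entrywise τ f o := by
  have hr : f o = ‖f o‖ • (1 : ℂ) := by simpa using Complex.eq_coe_norm_of_nonneg hf.le
  rwa [entrywise_apply, hr, map_smul, h.map_one, ← hr]

lemma IsTwistedSymmetry.entrywise_single [DecidableEq ι] (h : IsTwistedSymmetry o V τ ε) :
    entrywise τ (Pi.single o 1) = Pi.single o 1 := by
  ext s
  obtain rfl | hs := eq_or_ne s o <;> simp [*, h.map_one]

variable [Fintype ι]

lemma IsTwistedSymmetry.entrywise_mulVec (h : IsTwistedSymmetry o V τ ε) (i : Fin Nc)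
    (f : ι → ℂ) : entrywise τ (V i *ᵥ f) = ε i • (V i *ᵥ entrywise τ f) := by
  ext s
  simp [mulVec, dotProduct, h.map_mul, Finset.mul_sum]

variable [DecidableEq ι] {d : ι → ℝ}

lemma entrywise_diagonal_mulVec (τ : ι → ℂ ≃ₗᵢ[ℝ] ℂ) (d : ι → ℝ) (f : ι → ℂ) :
    entrywise τ (diagonal (fun s => (d s : ℂ)) *ᵥ f)
      = diagonal (fun s => (d s : ℂ)) *ᵥ entrywise τ f := by
  ext s
  simp [mulVec_diagonal, ← Complex.real_smul]

lemma IsTwistedSymmetry.entrywise_perturbedHamiltonian_mulVec (h : IsTwistedSymmetry o V τ ε)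
    (J : Fin Nc → ℝ) (f : ι → ℂ) :
    entrywise τ (perturbedHamiltonian d V J *ᵥ f)
      = perturbedHamiltonian d V (ε * J) *ᵥ entrywise τ f := by
  simp only [perturbedHamiltonian_mulVec, map_add, map_sum, map_smul, entrywise_diagonal_mulVec,
    h.entrywise_mulVec, smul_smul, Pi.mul_apply, mul_comm]

lemma IsTwistedSymmetry.isPositiveEigenstate (h : IsTwistedSymmetry o V τ ε) {J : Fin Nc → ℝ}
    {ψ : ι → ℂ} (hψ : IsPositiveEigenstate (perturbedHamiltonian d V J) o ψ) :
    IsPositiveEigenstate (perturbedHamiltonian d V (ε * J)) o (entrywise τ ψ) where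
  eigen := by
    obtain ⟨e, he⟩ := hψ.eigen
    exact ⟨e, by rw [← h.entrywise_perturbedHamiltonian_mulVec, he, map_smul]⟩
  sum_normSq := by simpa [Complex.normSq_eq_norm_sq] using hψ.sum_normSq
  apply_pos := h.entrywise_apply_pos hψ.apply_pos

theorem IsTwistedSymmetry.entrywise_iterPDeriv (h : IsTwistedSymmetry o V τ ε)
    (hd : ∀ s, s ≠ o → d s ≠ d o) {Ψ : (Fin Nc → ℝ) → ι → ℂ} (hΨ : ContinuousAt Ψ 0)
    (hΨH : ∀ᶠ J in 𝓝 0, IsPositiveEigenstate (perturbedHamiltonian d V J) o (Ψ J))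
    (k : Fin Nc → ℕ) :
    entrywise τ (iterPDeriv k Ψ 0) = (∏ i, ε i ^ k i) • iterPDeriv k Ψ 0 := by
  have hε : Continuous (ε * · : (Fin Nc → ℝ) → Fin Nc → ℝ) := by fun_prop
  have hε₀ : Tendsto (ε * ·) (𝓝 (0 : Fin Nc → ℝ)) (𝓝 0) := by simpa using hε.tendsto 0
  have hΨε : ∀ᶠ J in 𝓝 0, Ψ (ε * J) = entrywise τ (Ψ J) := by
    refine eventuallyEq_of_isPositiveEigenstate (d := fun s => (d s : ℂ)) (o := o)
      ((continuous_perturbedHamiltonian d V).comp hε).continuousAt ?_ ?_ ?_ ?_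
      (hε₀.eventually hΨH) (hΨH.mono fun J => h.isPositiveEigenstate)
    · simp [perturbedHamiltonian_zero]
    · exact fun s hs => by exact_mod_cast hd s hs
    · exact ContinuousAt.comp (g := Ψ) (by simpa using hΨ) hε.continuousAt
    · exact (entrywise τ).continuous.continuousAt.comp hΨ
  simpa using (eventually_iterPDeriv_mul_eq h.ne_zero k hΨε).self_of_nhds.symm

end TwistedSymmetries

section OrderedPowers

variable {Nq Nc : ℕ} {V : Fin Nc → Matrix (Fin Nq → Fin 2) (Fin Nq → Fin 2) ℂ}

lemma IsTwistedSymmetry.entrywise_Vpow_mulVec {o : Fin Nq → Fin 2}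
    {τ : (Fin Nq → Fin 2) → ℂ ≃ₗᵢ[ℝ] ℂ} {ε : Fin Nc → ℝ} (h : IsTwistedSymmetry o V τ ε)
    (k : Fin Nc → ℕ) (f : (Fin Nq → Fin 2) → ℂ) :
    entrywise τ (Vpow V k *ᵥ f) = (∏ i, ε i ^ k i) • (Vpow V k *ᵥ entrywise τ f) := by
  have hpow (i : Fin Nc) (m : ℕ) (f : (Fin Nq → Fin 2) → ℂ) :
      entrywise τ (V i ^ m *ᵥ f) = ε i ^ m • (V i ^ m *ᵥ entrywise τ f) := by
    induction m generalizing f with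
    | zero => simp
    | succ m ih =>
      simp only [pow_succ, ← mulVec_mulVec, ih, h.entrywise_mulVec, mulVec_smul, smul_smul]
  rw [Vpow, ← List.prod_ofFn, List.ofFn_eq_map, List.ofFn_eq_map]
  induction List.finRange Nc with
  | nil => simp
  | cons i l ih =>
    simp only [List.map_cons, List.prod_cons, ← mulVec_mulVec, hpow, ih, mulVec_smul, smul_smul]

lemma isUnit_Vpow (hV : ∀ i, IsUnit (V i)) (k : Fin Nc → ℕ) : IsUnit (Vpow V k) := by
  refine Submonoid.list_prod_mem (IsUnit.submonoid _) fun M hM => ?_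
  obtain ⟨i, rfl⟩ := (List.mem_ofFn' _ _).1 hM
  exact (hV i).pow (k i)

end OrderedPowers

section Pauli

variable {N Nq Nc : ℕ}

lemma ket_eq_single (s : Fin N → Fin 2) : ket s = Pi.single s 1 := by
  ext t
  simp [ket, Pi.single_apply]

lemma prod_diagonal_apply {ι κ R : Type*} [Fintype ι] [DecidableEq κ] [CommSemiring R]
    (δ : ι → κ → R) (s t : ι → κ) :
    ∏ n, diagonal (δ n) (s n) (t n) = diagonal (fun s => ∏ n, δ n (s n)) s t := by
  obtain rfl | hst := eq_or_ne s t
  · simp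
  · obtain ⟨n, hn⟩ := Function.ne_iff.1 hst
    rw [diagonal_apply_ne _ hst]
    exact Finset.prod_eq_zero (Finset.mem_univ n) (diagonal_apply_ne _ hn)

lemma pauli1_mul_self (a : Fin 4) : pauli1 a * pauli1 a = 1 := by
  fin_cases a <;> ext s t <;> fin_cases s <;> fin_cases t <;> simp [pauli1]

lemma pauliTensor_mul_apply (f g : Fin N → Fin 4) (s t : Fin N → Fin 2) :
    (pauliTensor f * pauliTensor g) s t = ∏ n, (pauli1 (f n) * pauli1 (g n)) (s n) (t n) := by
  simp only [mul_apply, pauliTensor, ← Finset.prod_mul_distrib, Fintype.prod_sum]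

lemma pauliTensor_mul_self (f : Fin N → Fin 4) : pauliTensor f * pauliTensor f = 1 := by
  ext s t
  simp only [pauliTensor_mul_apply, pauli1_mul_self, ← diagonal_one, prod_diagonal_apply,
    Finset.prod_const_one]

lemma Vpow_mulVec_ket_ne_zero (Vf : Fin Nc → Fin Nq → Fin 4) (k : Fin Nc → ℕ)
    (o : Fin Nq → Fin 2) : Vpow (fun i => pauliTensor (Vf i)) k *ᵥ ket o ≠ 0 := by
  have hinj := mulVec_injective_iff_isUnit.2 <|
    isUnit_Vpow (fun i => IsUnit.of_mul_eq_one _ (pauliTensor_mul_self (Vf i))) k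
  rw [← mulVec_zero (Vpow (fun i => pauliTensor (Vf i)) k), hinj.ne_iff, ket_eq_single]
  simp

/-- The sign `(-1)^(a + b)` of a bit `a` relative to a reference bit `b`. -/
def bitSign (b a : Fin 2) : ℝ := if a = b then 1 else -1

lemma bitSign_lt_self {b a : Fin 2} (h : a ≠ b) : bitSign b a < bitSign b b := by
  norm_num [bitSign, h]

lemma bitSign_le_self (b a : Fin 2) : bitSign b a ≤ bitSign b b := by
  obtain rfl | h := eq_or_ne a b
  · exact le_rfl
  · exact (bitSign_lt_self h).le

lemma bitSign_injective (b : Fin 2) : Function.Injective (bitSign b) := by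
  intro x y hxy
  fin_cases b <;> fin_cases x <;> fin_cases y <;>
    first | rfl | norm_num [bitSign] at hxy

/-- The sign with which a Pauli matrix commutes with `Z`. -/
def flipSign : Fin 4 → ℝ := ![1, -1, -1, 1]

/-- The sign with which complex conjugation acts on a Pauli matrix. -/
def conjSign : Fin 4 → ℝ := ![1, 1, -1, 1]

lemma flipSign_ne_zero (a : Fin 4) : flipSign a ≠ 0 := by
  fin_cases a <;> simp [flipSign]

lemma conjSign_ne_zero (a : Fin 4) : conjSign a ≠ 0 := by
  fin_cases a <;> simp [conjSign]

lemma bitSign_mul_pauli1 (b : Fin 2) (a : Fin 4) (x y : Fin 2) :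
    bitSign b x * pauli1 a x y = flipSign a * (pauli1 a x y * bitSign b y) := by
  fin_cases b <;> fin_cases a <;> fin_cases x <;> fin_cases y <;>
    simp [pauli1, flipSign, bitSign]

lemma conj_pauli1 (a : Fin 4) (x y : Fin 2) :
    starRingEnd ℂ (pauli1 a x y) = conjSign a * pauli1 a x y := by
  fin_cases a <;> fin_cases x <;> fin_cases y <;> simp [pauli1, conjSign]

lemma bitSign_mul_pauliTensor (n : Fin N) (b : Fin 2) (f : Fin N → Fin 4) (s t : Fin N → Fin 2) :
    bitSign b (s n) * pauliTensor f s t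
      = flipSign (f n) * (pauliTensor f s t * bitSign b (t n)) := by
  rw [pauliTensor, ← Finset.mul_prod_erase _ _ (Finset.mem_univ n)]
  linear_combination (∏ m ∈ Finset.univ.erase n, pauli1 (f m) (s m) (t m)) *
    bitSign_mul_pauli1 b (f n) (s n) (t n)

lemma conj_pauliTensor (f : Fin N → Fin 4) (s t : Fin N → Fin 2) :
    starRingEnd ℂ (pauliTensor f s t) = (∏ n, conjSign (f n) : ℝ) * pauliTensor f s t := by
  simp only [pauliTensor, map_prod, conj_pauli1, Finset.prod_mul_distrib, Complex.ofReal_prod]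

/-- Multiplication by `bitSign b a`, as an isometry. -/
noncomputable def bitSignIsometry (b a : Fin 2) : ℂ ≃ₗᵢ[ℝ] ℂ :=
  if a = b then .refl ℝ ℂ else .neg ℝ

lemma bitSignIsometry_apply (b a : Fin 2) (z : ℂ) : bitSignIsometry b a z = bitSign b a * z := by
  unfold bitSignIsometry bitSign
  split_ifs <;> simp

lemma isTwistedSymmetry_bitSign (Vf : Fin Nc → Fin Nq → Fin 4) (o : Fin Nq → Fin 2) (n : Fin Nq) :
    IsTwistedSymmetry o (fun i => pauliTensor (Vf i)) (fun s => bitSignIsometry (o n) (s n))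
      (fun i => flipSign (Vf i n)) where
  ne_zero i := flipSign_ne_zero _
  map_one := by simp [bitSignIsometry]
  map_mul i s t z := by
    simp only [bitSignIsometry_apply, Complex.real_smul]
    linear_combination z * bitSign_mul_pauliTensor n (o n) (Vf i) s t

lemma isTwistedSymmetry_conj (Vf : Fin Nc → Fin Nq → Fin 4) (o : Fin Nq → Fin 2) :
    IsTwistedSymmetry o (fun i => pauliTensor (Vf i)) (fun _ => Complex.conjLIE)
      (fun i => ∏ n, conjSign (Vf i n)) where
  ne_zero i := Finset.prod_ne_zero_iff.2 fun n _ => conjSign_ne_zero _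
  map_one := by simp
  map_mul i s t z := by
    simp only [Complex.conjLIE_apply, _root_.map_mul, conj_pauliTensor, Complex.real_smul,
      mul_assoc]

/-- The joint eigenspaces of the operators `Z_n` are spanned by single basis states. -/
lemma exists_eq_smul_of_bitSign_eigenvector {o : Fin N → Fin 2} {c : Fin N → ℝ}
    {F v : (Fin N → Fin 2) → ℂ} (hv₀ : v ≠ 0)
    (hF : ∀ n, entrywise (fun s => bitSignIsometry (o n) (s n)) F = c n • F)
    (hv : ∀ n, entrywise (fun s => bitSignIsometry (o n) (s n)) v = c n • v) :
    ∃ z : ℂ, F = z • v := by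
  have hsign : ∀ {f : (Fin N → Fin 2) → ℂ},
      (∀ n, entrywise (fun s => bitSignIsometry (o n) (s n)) f = c n • f) →
      ∀ s, f s ≠ 0 → ∀ n, bitSign (o n) (s n) = c n := fun hf s hs n => by
    have hfs := congrFun (hf n) s
    rw [entrywise_apply, bitSignIsometry_apply, Pi.smul_apply, Complex.real_smul] at hfs
    exact_mod_cast mul_right_cancel₀ hs hfs
  obtain ⟨s₀, hs₀⟩ := Function.ne_iff.1 hv₀
  have hsupp : ∀ {f : (Fin N → Fin 2) → ℂ},
      (∀ n, entrywise (fun s => bitSignIsometry (o n) (s n)) f = c n • f) →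
      ∀ s, s ≠ s₀ → f s = 0 := fun hf s hs => by
    by_contra hfs
    exact hs (funext fun n => bitSign_injective (o n)
      ((hsign hf s hfs n).trans (hsign hv s₀ hs₀ n).symm))
  refine ⟨F s₀ / v s₀, funext fun s => ?_⟩
  obtain rfl | hs := eq_or_ne s s₀
  · exact (div_mul_cancel₀ _ hs₀).symm
  · simp [hsupp hF s hs, hsupp hv s hs]

lemma conj_eq_of_entrywise_conj {ι : Type*} {F v : ι → ℂ} {z : ℂ} {c : ℝ} (hc : c ≠ 0)
    (hv₀ : v ≠ 0) (hz : F = z • v)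
    (hF : entrywise (fun _ => Complex.conjLIE) F = c • F)
    (hv : entrywise (fun _ => Complex.conjLIE) v = c • v) : starRingEnd ℂ z = z := by
  obtain ⟨s, hs⟩ := Function.ne_iff.1 hv₀
  have hFs := congrFun hF s
  have hvs := congrFun hv s
  simp only [hz, entrywise_apply, Complex.conjLIE_apply, Pi.smul_apply, smul_eq_mul, map_mul,
    Complex.real_smul] at hFs hvs
  have hcs : (c : ℂ) * v s ≠ 0 := mul_ne_zero (by exact_mod_cast hc) hs
  refine mul_right_cancel₀ hcs ?_
  linear_combination hFs - starRingEnd ℂ z * hvs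

end Pauli

/-- The energy `-∑ n, ± h n` of the basis state `|s⟩` in `H₀ = -∑ n, h n • Z_n`. -/
def fieldEnergy {N : ℕ} (h : Fin N → ℝ) (s : Fin N → Fin 2) : ℝ :=
  -∑ n, h n * bitSign 0 (s n)

lemma fieldEnergy_zero_lt {N : ℕ} {h : Fin N → ℝ} (hpos : ∀ n, 0 < h n) {s : Fin N → Fin 2}
    (hs : s ≠ 0) : fieldEnergy h 0 < fieldEnergy h s := by
  obtain ⟨m, hm⟩ := Function.ne_iff.1 hs
  refine neg_lt_neg (Finset.sum_lt_sum (fun n _ => ?_) ⟨m, Finset.mem_univ m, ?_⟩)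
  · exact mul_le_mul_of_nonneg_left (bitSign_le_self 0 (s n)) (hpos n).le
  · exact mul_lt_mul_of_pos_left (bitSign_lt_self hm) (hpos m)

lemma pauli1_three : pauli1 3 = diagonal fun a => (bitSign 0 a : ℂ) := by
  ext s t
  fin_cases s <;> fin_cases t <;> simp [pauli1, bitSign]

lemma pauliTensor_Z {N : ℕ} (n : Fin N) :
    pauliTensor (fun q => if q = n then (3 : Fin 4) else 0)
      = diagonal fun s => (bitSign 0 (s n) : ℂ) := by
  have hfactor (q : Fin N) : pauli1 (if q = n then (3 : Fin 4) else 0)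
      = diagonal fun a => if q = n then (bitSign 0 a : ℂ) else 1 := by
    split_ifs with hq
    · exact pauli1_three
    · exact diagonal_one.symm
  ext s t
  simp only [pauliTensor, hfactor, prod_diagonal_apply, Finset.prod_ite_eq', Finset.mem_univ,
    if_true]

lemma neg_sum_smul_pauliTensor_Z {N : ℕ} (h : Fin N → ℝ) :
    -∑ n, (h n : ℂ) • pauliTensor (fun q => if q = n then (3 : Fin 4) else 0)
      = diagonal fun s => (fieldEnergy h s : ℂ) := by
  ext s t
  obtain rfl | hst := eq_or_ne s t <;>
    simp [*, pauliTensor_Z, fieldEnergy, Matrix.sum_apply]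

/-- `iterPDeriv k Ψ 0` is not a junk value: the positive eigenstate near `|o⟩` being locally unique,
a family `Ψ` of them that is continuous at `0` is analytic near `0`. -/
theorem perturbative_coefficients_real_multiple_general {Nq Nc : ℕ} {d : (Fin Nq → Fin 2) → ℝ}
    {o : Fin Nq → Fin 2} (hd : ∀ s, s ≠ o → d s ≠ d o) (Vf : Fin Nc → Fin Nq → Fin 4)
    {Ψ : (Fin Nc → ℝ) → (Fin Nq → Fin 2) → ℂ} (hΨ : ContinuousAt Ψ 0)
    (hΨH : ∀ᶠ J in 𝓝 0, IsPositiveEigenstate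
      (perturbedHamiltonian d (fun i => pauliTensor (Vf i)) J) o (Ψ J)) (k : Fin Nc → ℕ) :
    ∃ C : ℝ, (∏ i, (Nat.factorial (k i) : ℝ))⁻¹ • iterPDeriv k Ψ 0
      = (C : ℂ) • (Vpow (fun i => pauliTensor (Vf i)) k).mulVec (ket o) := by
  have hv₀ := Vpow_mulVec_ket_ne_zero Vf k o
  have hF {τ ε} (h : IsTwistedSymmetry o (fun i => pauliTensor (Vf i)) τ ε) :=
    h.entrywise_iterPDeriv hd hΨ hΨH k
  have hv {τ ε} (h : IsTwistedSymmetry o (fun i => pauliTensor (Vf i)) τ ε) :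
      entrywise τ (Vpow (fun i => pauliTensor (Vf i)) k *ᵥ ket o)
        = (∏ i, ε i ^ k i) • (Vpow (fun i => pauliTensor (Vf i)) k *ᵥ ket o) := by
    rw [h.entrywise_Vpow_mulVec, ket_eq_single, h.entrywise_single]
  have hsign := isTwistedSymmetry_bitSign Vf o
  obtain ⟨z, hz⟩ := exists_eq_smul_of_bitSign_eigenvector hv₀
    (fun n => hF (hsign n)) (fun n => hv (hsign n))
  have hconj := isTwistedSymmetry_conj Vf o
  have hc : ∏ i, (∏ n, conjSign (Vf i n)) ^ k i ≠ 0 :=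
    Finset.prod_ne_zero_iff.2 fun i _ => pow_ne_zero (k i) (hconj.ne_zero i)
  obtain ⟨c, rfl⟩ := Complex.conj_eq_iff_real.1 <|
    conj_eq_of_entrywise_conj hc hv₀ hz (hF hconj) (hv hconj)
  exact ⟨(∏ i, (Nat.factorial (k i) : ℝ))⁻¹ * c, by
    rw [hz, Complex.coe_smul, Complex.coe_smul, smul_smul]⟩

/-- for the analytic ground-state family `Ψ(J)` of
`H_0 + ∑_i J_i V_i` (with `H_0 = −∑_n h_n Z_n`, `h_n > 0`), normalized with
`⟨0|Ψ(J)⟩` real positive and `Ψ(0) = |0⟩`, every multivariate Taylor coefficient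
`Ψ_k = (1/k!)∂^k_J Ψ(0)` is a real multiple of `V^{·k}|0⟩`. -/
theorem perturbative_coefficients_real_multiple {Nq Nc : ℕ} (hNq : 1 ≤ Nq) (hNc : 1 ≤ Nc)
    (h : Fin Nq → ℝ) (hpos : ∀ n, 0 < h n)
    (Vf : Fin Nc → Fin Nq → Fin 4)
    (Ψ : (Fin Nc → ℝ) → (Fin Nq → Fin 2) → ℂ)
    (E : (Fin Nc → ℝ) → ℝ)
    (Unb : Set (Fin Nc → ℝ)) (hUnb : Unb ∈ nhds (0 : Fin Nc → ℝ))
    (hΨan : ∀ J ∈ Unb, AnalyticAt ℝ Ψ J)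
    (hEan : ∀ J ∈ Unb, AnalyticAt ℝ E J)
    (heig : ∀ J ∈ Unb,
      ((-∑ n : Fin Nq, ((h n : ℝ) : ℂ) • pauliTensor (fun q => if q = n then (3 : Fin 4) else 0)) +
        ∑ i : Fin Nc, ((J i : ℝ) : ℂ) • pauliTensor (Vf i)).mulVec (Ψ J) = ((E J : ℝ) : ℂ) • Ψ J)
    (hnorm : ∀ J ∈ Unb, (∑ x, Complex.normSq (Ψ J x)) = 1)
    (hreal : ∀ J ∈ Unb, (Ψ J (fun _ => 0)).im = 0 ∧ 0 < (Ψ J (fun _ => 0)).re)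
    (hΨ0 : Ψ 0 = ket (fun _ => 0)) :
    ∀ k : Fin Nc → ℕ, ∃ C : ℝ,
      (∏ i, (Nat.factorial (k i) : ℝ))⁻¹ • iterPDeriv k Ψ 0
        = (C : ℂ) • (Vpow (fun i => pauliTensor (Vf i)) k).mulVec (ket (fun _ => 0)) := by
  intro k
  refine perturbative_coefficients_real_multiple_general
    (fun s hs => (fieldEnergy_zero_lt hpos hs).ne') Vf
    (hΨan 0 (mem_of_mem_nhds hUnb)).continuousAt (eventually_of_mem hUnb fun J hJ => ?_) k
  exact ⟨⟨E J, by rw [perturbedHamiltonian, ← neg_sum_smul_pauliTensor_Z, heig J hJ,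
    Complex.coe_smul]⟩, hnorm J hJ, Complex.pos_iff.2 ⟨(hreal J hJ).2, (hreal J hJ).1.symm⟩⟩
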